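/- ∑_{n=1}^∞ 2ⁿ / (n³ C(2n,n)) = −(35/16) ζ(3) + (π²/8) log 2 + π G. -/

import Mathlib

/-!
Both sides are computed from `I = ∫₀^{π/4} t² cot t dt`.

*The binomial series is `4 I`.* With `a_n = 4ⁿ / (2 n² C(2n,n))` one has `t² = ∑_{n ≥ 1} a_n sin²ⁿ t`
(the series of `arcsin²`). Quantitatively, the remainder `D_N` of the `N`-th partial sum satisfies
`D_N(0) = D_N'(0) = 0` and `D_N'' = b_N sin²ᴺ t` with `b_N = 2 · 4ᴺ / C(2N,N)`, because the second
derivatives telescope. On `[0, π/4]` we have `sin² t ≤ 1/2`, hence `0 ≤ D_N ≤ b_N 2⁻ᴺ t² / 2`, and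
`b_N 2⁻ᴺ → 0`. Multiplying by `cot t` and integrating, the `n`-th term becomes
`a_n sin²ⁿ(π/4) / (2n) = 2ⁿ / (4 n³ C(2n,n))` and the remainder is at most `b_N 2⁻ᴺ I / 2`.

*The integral in closed form.* The Dirichlet-kernel identity
`cot t = ∑_{k ≤ N} 2 sin 2kt + cos((2N+1)t) / sin t` and the Riemann–Lebesgue lemma give
`I = lim ∑_{k ≤ N} ∫₀^{π/4} 2 t² sin 2kt dt`. These moments are elementary; along even `N` the odd
`k` contribute `G` and `∑ 1/(2j+1)³`, the even `k` contribute the alternating harmonic series and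
the cubes, which yields `4 I = -(35/16) ζ(3) + (π²/8) log 2 + π G`.
-/

open Real
open Filter Topology MeasureTheory Finset

/-! ### Two limits: Riemann–Lebesgue and the alternating harmonic series -/

/-- Riemann–Lebesgue lemma for cosines on `[0, a]`: the real part of Mathlib's Fourier version,
applied to `g` extended by zero. -/
lemma tendsto_integral_mul_cos {a : ℝ} (ha : 0 ≤ a) {g : ℝ → ℝ}
    (hg : ContinuousOn g (Set.Icc 0 a)) :
    Tendsto (fun w : ℝ => ∫ t in (0 : ℝ)..a, g t * Real.cos (w * t)) atTop (𝓝 0) := by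
  have h := Real.tendsto_integral_exp_smul_cocompact
    ((Set.Ioc (0 : ℝ) a).indicator (fun t => (g t : ℂ)))
  have hw : Tendsto (fun w : ℝ => w / (2 * π)) atTop (cocompact ℝ) :=
    (tendsto_id.atTop_div_const (by positivity)).mono_right atTop_le_cocompact
  have h2 := (Complex.continuous_re.tendsto _).comp (h.comp hw)
  rw [Complex.zero_re] at h2
  refine h2.congr fun w => ?_
  have hgi : IntegrableOn (fun t => (g t : ℂ)) (Set.Ioc 0 a) :=
    ((hg.integrableOn_Icc).mono_set Set.Ioc_subset_Icc_self).ofReal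
  have hi : Integrable ((Set.Ioc (0 : ℝ) a).indicator (fun t => (g t : ℂ))) :=
    hgi.integrable_indicator measurableSet_Ioc
  have hi2 := (Real.fourierIntegral_convergent_iff (w / (2 * π))).2 hi
  have hi3 : Integrable (fun v : ℝ => Real.fourierChar (-(v * (w / (2 * π)))) •
      (Set.Ioc (0 : ℝ) a).indicator (fun t => (g t : ℂ)) v) := by
    refine hi2.congr (.of_forall fun v => ?_)
    simp [mul_comm]
  rw [intervalIntegral.integral_of_le ha, ← integral_indicator measurableSet_Ioc]
  simp only [Function.comp_apply]
  have := integral_re hi3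
  simp only [RCLike.re_eq_complex_re] at this
  rw [← this]
  congr 1
  ext v
  by_cases hv : v ∈ Set.Ioc (0 : ℝ) a
  · simp only [Set.indicator_of_mem hv]
    rw [Circle.smul_def, Real.fourierChar_apply, smul_eq_mul, Complex.re_mul_ofReal,
      Complex.exp_ofReal_mul_I_re, mul_comm]
    congr 1
    rw [← Real.cos_neg]
    congr 1
    field_simp
  · simp [Set.indicator_of_notMem hv]

/-- The partial sums converge by Leibniz's criterion, and Abel's limit theorem applied to
`log (1 + x)` identifies the limit. -/
lemma tendsto_sum_alternating_harmonic :
    Tendsto (fun n => ∑ j ∈ range n, (-1 : ℝ) ^ j / ((j : ℝ) + 1)) atTop (𝓝 (Real.log 2)) := by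
  -- The sums converge to some `l`; both `l` and `log 2` are limits of `log (1 + x)` as `x → 1⁻`.
  have hanti : Antitone (fun n : ℕ => 1 / ((n : ℝ) + 1)) := fun m n h => by
    have : (m : ℝ) ≤ n := by exact_mod_cast h
    dsimp only
    gcongr
  obtain ⟨l, hl⟩ := hanti.tendsto_alternating_series_of_tendsto_zero
    tendsto_one_div_add_atTop_nhds_zero_nat
  have hlim : Tendsto (fun n => ∑ j ∈ range n, (-1 : ℝ) ^ j / ((j : ℝ) + 1)) atTop (𝓝 l) := by
    simpa only [mul_one_div] using hl
  have hA := Real.tendsto_tsum_powerSeries_nhdsWithin_lt hlim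
  have hid : Tendsto (fun x : ℝ => x) (𝓝[<] 1) (𝓝 1) := tendsto_nhdsWithin_of_tendsto_nhds tendsto_id
  have hB := hid.mul hA
  have hC : Tendsto (fun x : ℝ => Real.log (1 + x)) (𝓝[<] 1) (𝓝 (Real.log 2)) := by
    have : ContinuousAt (fun x : ℝ => Real.log (1 + x)) 1 :=
      ContinuousAt.log (by fun_prop) (by norm_num)
    have h2 := this.tendsto
    norm_num at h2
    exact tendsto_nhdsWithin_of_tendsto_nhds h2
  have hD : (fun x : ℝ => x * ∑' n : ℕ, (-1 : ℝ) ^ n / ((n : ℝ) + 1) * x ^ n) =ᶠ[𝓝[<] 1]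
      fun x => Real.log (1 + x) := by
    have h0 : ∀ᶠ x : ℝ in 𝓝[<] 1, 0 < x :=
      hid.eventually (lt_mem_nhds (by norm_num : (0 : ℝ) < 1))
    filter_upwards [self_mem_nhdsWithin, h0] with x hx hx0
    have hs := Real.hasSum_pow_div_log_of_abs_lt_one (x := -x)
      (by rw [abs_neg, abs_of_pos hx0]; exact hx)
    have hs2 := hs.neg.tsum_eq
    rw [neg_neg, sub_neg_eq_add] at hs2
    rw [← hs2, ← tsum_mul_left]
    congr 1
    ext n
    rw [neg_pow x, pow_succ (-1 : ℝ), pow_succ x]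
    ring
  have := tendsto_nhds_unique (hB.congr' hD) hC
  rw [one_mul] at this
  rwa [this] at hlim

/-! ### The expansion of `t²` in powers of `sin t` -/

lemma sin_sq_le_half {t : ℝ} (h0 : 0 ≤ t) (h1 : t ≤ π / 4) : Real.sin t ^ 2 ≤ 1 / 2 := by
  have hs : Real.sin t ≤ Real.sin (π / 4) :=
    Real.sin_le_sin_of_le_of_le_pi_div_two (by linarith [Real.pi_pos]) (by linarith [Real.pi_pos]) h1
  have hp : 0 ≤ Real.sin t := Real.sin_nonneg_of_nonneg_of_le_pi h0 (by linarith [Real.pi_pos])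
  rw [Real.sin_pi_div_four] at hs
  calc Real.sin t ^ 2 ≤ (√2 / 2) ^ 2 := by gcongr
    _ = 1 / 2 := by rw [div_pow, Real.sq_sqrt (by norm_num)]; norm_num

lemma nonneg_of_second_deriv_nonneg {a : ℝ} {f f' f'' : ℝ → ℝ}
    (h1 : ∀ t, HasDerivAt f (f' t) t) (h2 : ∀ t, HasDerivAt f' (f'' t) t)
    (h0 : f 0 = 0) (hd0 : f' 0 = 0) (hpos : ∀ t ∈ Set.Icc 0 a, 0 ≤ f'' t) :
    ∀ t ∈ Set.Icc 0 a, 0 ≤ f t := by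
  have key : ∀ {f f' : ℝ → ℝ}, (∀ t, HasDerivAt f (f' t) t) → f 0 = 0 →
      (∀ t ∈ Set.Icc 0 a, 0 ≤ f' t) → ∀ t ∈ Set.Icc 0 a, 0 ≤ f t := by
    intro f f' h1 h0 hpos t ht
    have hm : MonotoneOn f (Set.Icc 0 a) := by
      refine monotoneOn_of_deriv_nonneg (convex_Icc _ _)
        (fun x _ => (h1 x).continuousAt.continuousWithinAt)
        (fun x _ => (h1 x).differentiableAt.differentiableWithinAt) fun x hx => ?_
      rw [(h1 x).deriv]
      exact hpos x (interior_subset hx)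
    have := hm ⟨le_rfl, ht.1.trans ht.2⟩ ht ht.1
    rwa [h0] at this
  exact key h1 h0 (key h2 hd0 hpos)

/-- The coefficient of `x ^ (2n + 2)` in the power series of `arcsin² x`. The index is shifted, so
that `n = 0` is the first nonzero term. -/
noncomputable def arcsinCoeff (n : ℕ) : ℝ :=
  4 ^ (n + 1) / (2 * ((n : ℝ) + 1) ^ 2 * (n + 1).centralBinom)

/-- The remainder of `t² = arcsin² (sin t)` after `N` terms of its expansion in powers of `sin t`. -/
noncomputable def defect (N : ℕ) (t : ℝ) : ℝ :=
  t ^ 2 - ∑ n ∈ range N, arcsinCoeff n * Real.sin t ^ (2 * n + 2)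

/-- The constant `b_N` for which the second derivative of `defect N` is `b_N sin²ᴺ t`. -/
noncomputable def wallis (N : ℕ) : ℝ := 2 * 4 ^ N / N.centralBinom

lemma centralBinom_cast_pos (n : ℕ) : (0 : ℝ) < n.centralBinom := by
  exact_mod_cast n.centralBinom_pos

lemma arcsinCoeff_mul_succ (n : ℕ) :
    arcsinCoeff n * (2 * n + 2) * (2 * n + 2) = wallis (n + 1) := by
  have := centralBinom_cast_pos (n + 1)
  unfold arcsinCoeff wallis
  field_simp

lemma arcsinCoeff_mul (n : ℕ) :
    arcsinCoeff n * (2 * n + 2) * (2 * n + 1) = wallis n := by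
  have h1 := centralBinom_cast_pos (n + 1)
  have h2 := centralBinom_cast_pos n
  have h : ((n : ℝ) + 1) * (n + 1).centralBinom = 2 * (2 * n + 1) * n.centralBinom := by
    exact_mod_cast n.succ_mul_centralBinom_succ
  have h3 : ((n + 1).centralBinom : ℝ) = 2 * (2 * n + 1) * n.centralBinom / ((n : ℝ) + 1) := by
    rw [← h]; field_simp
  unfold arcsinCoeff wallis
  rw [h3]
  field_simp
  ring

/-- The second derivatives of the terms of the `arcsin²` expansion telescope. -/
lemma wallis_sum (N : ℕ) (t : ℝ) :
    2 - ∑ n ∈ range N, arcsinCoeff n * (2 * n + 2) *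
      ((2 * n + 1) * Real.sin t ^ (2 * n) * Real.cos t ^ 2 - Real.sin t ^ (2 * n + 2)) =
    wallis N * Real.sin t ^ (2 * N) := by
  induction N with
  | zero => simp [wallis]
  | succ N ih =>
    rw [sum_range_succ, ← sub_sub, ih, Real.cos_sq', ← arcsinCoeff_mul_succ, ← arcsinCoeff_mul]
    ring

lemma hasDerivAt_defect (N : ℕ) (t : ℝ) :
    HasDerivAt (defect N) (2 * t - ∑ n ∈ range N,
      arcsinCoeff n * (2 * n + 2) * (Real.sin t ^ (2 * n + 1) * Real.cos t)) t := by
  unfold defect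
  refine HasDerivAt.fun_sub (by simpa using hasDerivAt_pow 2 t) (HasDerivAt.fun_sum fun n _ => ?_)
  refine (((Real.hasDerivAt_sin t).fun_pow (2 * n + 2)).const_mul (arcsinCoeff n)).congr_deriv ?_
  rw [show 2 * n + 2 - 1 = 2 * n + 1 by omega]
  push_cast
  ring

lemma hasDerivAt_deriv_defect (N : ℕ) (t : ℝ) :
    HasDerivAt (fun t => 2 * t - ∑ n ∈ range N,
      arcsinCoeff n * (2 * n + 2) * (Real.sin t ^ (2 * n + 1) * Real.cos t))
      (wallis N * Real.sin t ^ (2 * N)) t := by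
  rw [← wallis_sum]
  refine HasDerivAt.fun_sub (by simpa using (hasDerivAt_id t).const_mul 2)
    (HasDerivAt.fun_sum fun n _ => ?_)
  refine HasDerivAt.const_mul (arcsinCoeff n * (2 * n + 2)) ?_
  refine (((Real.hasDerivAt_sin t).fun_pow (2 * n + 1)).fun_mul
    (Real.hasDerivAt_cos t)).congr_deriv ?_
  rw [show 2 * n + 1 - 1 = 2 * n by omega]
  push_cast
  ring

lemma defect_mem (N : ℕ) {t : ℝ} (ht : t ∈ Set.Icc 0 (π / 4)) :
    0 ≤ defect N t ∧ defect N t ≤ wallis N * (1 / 2) ^ N * (t ^ 2 / 2) := by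
  have hw : 0 ≤ wallis N := by unfold wallis; positivity
  have h0 : defect N 0 = 0 := by simp [defect]
  constructor
  · refine nonneg_of_second_deriv_nonneg (hasDerivAt_defect N) (hasDerivAt_deriv_defect N)
      h0 (by simp) (fun s hs => ?_) t ht
    rw [pow_mul]; positivity
  · rw [← sub_nonneg]
    refine nonneg_of_second_deriv_nonneg (a := π / 4)
      (f := fun t => wallis N * (1 / 2) ^ N * (t ^ 2 / 2) - defect N t)
      (f'' := fun t => wallis N * (1 / 2) ^ N * 1 - wallis N * Real.sin t ^ (2 * N))
      (fun s => HasDerivAt.fun_sub (HasDerivAt.const_mul (d' := s) _ ?_) (hasDerivAt_defect N s))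
      (fun s => HasDerivAt.fun_sub (HasDerivAt.const_mul _ (hasDerivAt_id' s))
        (hasDerivAt_deriv_defect N s))
      (by simp [h0]) (by simp) (fun s hs => ?_) t ht
    · convert (hasDerivAt_pow 2 s).div_const 2 using 1
      simp
    · have := sin_sq_le_half hs.1 hs.2
      rw [mul_one, sub_nonneg, pow_mul]
      gcongr

/-- Consequence of `4ᴺ ≤ 2 N C(2N,N)`, which gives `b_N 2⁻ᴺ ≤ 4 N / 2ᴺ`. -/
lemma tendsto_wallis_mul : Tendsto (fun N => wallis N * (1 / 2) ^ N) atTop (𝓝 0) := by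
  have h := (tendsto_pow_const_div_const_pow_of_one_lt 1 (r := (2 : ℝ)) (by norm_num)).const_mul 4
  rw [mul_zero] at h
  refine squeeze_zero' (.of_forall fun N => by unfold wallis; positivity) ?_ h
  filter_upwards [eventually_gt_atTop 0] with N hN
  have h1 : (4 : ℝ) ^ N ≤ 2 * N * N.centralBinom := by
    exact_mod_cast Nat.four_pow_le_two_mul_self_mul_centralBinom N hN
  have h2 := centralBinom_cast_pos N
  unfold wallis
  rw [one_div, inv_pow, ← div_eq_mul_inv, pow_one, mul_div_assoc']
  gcongr
  rw [div_le_iff₀ h2]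
  linarith

/-! ### The series as an integral of `t² cot t` -/

/-- The function `t² cot t`, written with `sinc` so that it is continuous at `0`. -/
noncomputable def sqCot (t : ℝ) : ℝ := t * Real.cos t / Real.sinc t

lemma sinc_ne_zero {t : ℝ} (ht : t ∈ Set.Icc 0 (π / 4)) : Real.sinc t ≠ 0 := by
  rcases ht.1.eq_or_lt with rfl | h
  · simp
  · rw [Real.sinc_of_ne_zero h.ne']
    have := Real.sin_pos_of_pos_of_lt_pi h (by linarith [ht.2, Real.pi_pos])
    positivity

lemma continuousOn_sqCot : ContinuousOn sqCot (Set.Icc 0 (π / 4)) :=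
  ContinuousOn.div (by fun_prop) (by fun_prop) fun _ h => sinc_ne_zero h

lemma intervalIntegrable_sqCot : IntervalIntegrable sqCot volume 0 (π / 4) :=
  (continuousOn_sqCot.mono (by rw [Set.uIcc_of_le (by positivity)])).intervalIntegrable

/-- The bounds on `defect N t`, multiplied by `cot t`. -/
lemma sqCot_sub_mem (N : ℕ) {t : ℝ} (ht : t ∈ Set.Icc 0 (π / 4)) :
    ∑ n ∈ range N, arcsinCoeff n * (Real.sin t ^ (2 * n + 1) * Real.cos t) ≤ sqCot t ∧
    sqCot t - wallis N * (1 / 2) ^ N / 2 * sqCot t ≤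
      ∑ n ∈ range N, arcsinCoeff n * (Real.sin t ^ (2 * n + 1) * Real.cos t) := by
  rcases ht.1.eq_or_lt with rfl | h
  · simp [sqCot]
  · have hs := Real.sin_pos_of_pos_of_lt_pi h (by linarith [ht.2, Real.pi_pos])
    have hc := Real.cos_pos_of_mem_Ioo (x := t)
      ⟨by linarith [Real.pi_pos], by linarith [ht.2, Real.pi_pos]⟩
    have hcot : 0 ≤ Real.cos t / Real.sin t := by positivity
    have hF : sqCot t = t ^ 2 * (Real.cos t / Real.sin t) := by
      rw [sqCot, Real.sinc_of_ne_zero h.ne']; field_simp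
    have hS : ∑ n ∈ range N, arcsinCoeff n * (Real.sin t ^ (2 * n + 1) * Real.cos t) =
        sqCot t - defect N t * (Real.cos t / Real.sin t) := by
      rw [hF, defect, ← sub_mul, sub_sub_cancel, sum_mul]
      refine sum_congr rfl fun n _ => ?_
      field_simp
      ring
    obtain ⟨h1, h2⟩ := defect_mem N ht
    have h3 := mul_le_mul_of_nonneg_right h2 hcot
    have h4 := mul_nonneg h1 hcot
    rw [hS]
    constructor
    · linarith
    · rw [hF]; linarith

lemma integral_arcsin_term (n : ℕ) :
    ∫ t in (0 : ℝ)..(π / 4), arcsinCoeff n * (Real.sin t ^ (2 * n + 1) * Real.cos t) =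
      1 / 4 * ((2 : ℝ) ^ (n + 1) /
        (((n : ℝ) + 1) ^ 3 * ((2 * (n + 1)).choose (n + 1) : ℝ))) := by
  have hd : ∀ t ∈ Set.uIcc (0 : ℝ) (π / 4),
      HasDerivAt (fun t => arcsinCoeff n * (Real.sin t ^ (2 * n + 2) / (2 * n + 2)))
        (arcsinCoeff n * (Real.sin t ^ (2 * n + 1) * Real.cos t)) t := by
    intro t _
    refine HasDerivAt.const_mul _ ?_
    refine (((Real.hasDerivAt_sin t).fun_pow (2 * n + 2)).div_const
      (2 * (n : ℝ) + 2)).congr_deriv ?_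
    rw [show 2 * n + 2 - 1 = 2 * n + 1 by omega]
    push_cast
    field_simp
  rw [intervalIntegral.integral_eq_sub_of_hasDerivAt hd
    (Continuous.intervalIntegrable (by fun_prop) _ _)]
  have h2 : Real.sin (π / 4) ^ (2 * n + 2) = (1 / 2) ^ (n + 1) := by
    rw [show 2 * n + 2 = 2 * (n + 1) by ring, pow_mul, Real.sin_pi_div_four, div_pow,
      Real.sq_sqrt (by norm_num)]
    norm_num
  have h3 := centralBinom_cast_pos (n + 1)
  have h4 : (4 : ℝ) ^ (n + 1) = 2 ^ (n + 1) * 2 ^ (n + 1) := by rw [← mul_pow]; norm_num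
  rw [h2, ← Nat.centralBinom_eq_two_mul_choose, arcsinCoeff, h4]
  simp
  field_simp
  ring

lemma tsum_eq_integral :
    ∑' n : ℕ, (2 : ℝ) ^ (n + 1) /
        (((n : ℝ) + 1) ^ 3 * ((2 * (n + 1)).choose (n + 1) : ℝ)) =
      4 * ∫ t in (0 : ℝ)..(π / 4), sqCot t := by
  refine HasSum.tsum_eq ((hasSum_iff_tendsto_nat_of_nonneg (fun n => by positivity) _).2 ?_)
  set I := ∫ t in (0 : ℝ)..(π / 4), sqCot t with hI
  have hpi : (0 : ℝ) ≤ π / 4 := by positivity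
  have hint : ∀ n, IntervalIntegrable
      (fun t => arcsinCoeff n * (Real.sin t ^ (2 * n + 1) * Real.cos t)) volume 0 (π / 4) :=
    fun n => Continuous.intervalIntegrable (by fun_prop) _ _
  have hintS : ∀ N, IntervalIntegrable (fun t => ∑ n ∈ range N,
      arcsinCoeff n * (Real.sin t ^ (2 * n + 1) * Real.cos t)) volume 0 (π / 4) :=
    fun N => Continuous.intervalIntegrable (by fun_prop) _ _
  have hS : ∀ N, ∑ n ∈ range N, (2 : ℝ) ^ (n + 1) /
        (((n : ℝ) + 1) ^ 3 * ((2 * (n + 1)).choose (n + 1) : ℝ)) =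
      4 * ∫ t in (0 : ℝ)..(π / 4), ∑ n ∈ range N,
        arcsinCoeff n * (Real.sin t ^ (2 * n + 1) * Real.cos t) := by
    intro N
    rw [intervalIntegral.integral_finsetSum fun n _ => hint n, mul_sum]
    refine sum_congr rfl fun n _ => ?_
    rw [integral_arcsin_term]
    ring
  simp_rw [hS]
  refine Tendsto.const_mul 4 ?_
  refine tendsto_of_tendsto_of_tendsto_of_le_of_le
    (g := fun N => I - wallis N * (1 / 2) ^ N / 2 * I) (h := fun _ => I) ?_ tendsto_const_nhds
    (fun N => ?_) (fun N => ?_)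
  · have := ((tendsto_wallis_mul.div_const 2).mul_const I).const_sub I
    simpa using this
  · dsimp only
    rw [hI, ← intervalIntegral.integral_const_mul,
      ← intervalIntegral.integral_sub intervalIntegrable_sqCot
        (intervalIntegrable_sqCot.const_mul _)]
    exact intervalIntegral.integral_mono_on hpi
      (intervalIntegrable_sqCot.sub (intervalIntegrable_sqCot.const_mul _)) (hintS N)
      fun t ht => (sqCot_sub_mem N ht).2
  · exact intervalIntegral.integral_mono_on hpi (hintS N) intervalIntegrable_sqCot
      fun t ht => (sqCot_sub_mem N ht).1

/-! ### The integral as a limit of sine moments -/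

/-- The Dirichlet-kernel identity, multiplied by `sin t`. -/
lemma cos_sub_sum_sin (N : ℕ) (t : ℝ) :
    Real.cos t - 2 * Real.sin t * ∑ k ∈ range N, Real.sin (2 * ((k : ℝ) + 1) * t) =
      Real.cos ((2 * N + 1) * t) := by
  induction N with
  | zero => simp
  | succ N ih =>
    rw [sum_range_succ, mul_add, ← sub_sub, ih]
    have h1 : (2 * (N : ℝ) + 1) * t = 2 * ((N : ℝ) + 1) * t - t := by ring
    have h2 : (2 * ((N + 1 : ℕ) : ℝ) + 1) * t = 2 * ((N : ℝ) + 1) * t + t := by push_cast; ring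
    rw [h1, h2, Real.cos_sub, Real.cos_add]
    ring

lemma sqCot_eq (N : ℕ) (t : ℝ) (ht : t ∈ Set.Icc 0 (π / 4)) :
    sqCot t = ∑ k ∈ range N, 2 * t ^ 2 * Real.sin (2 * ((k : ℝ) + 1) * t) +
      t / Real.sinc t * Real.cos ((2 * N + 1) * t) := by
  rcases ht.1.eq_or_lt with rfl | h
  · simp [sqCot]
  · have hs := Real.sin_pos_of_pos_of_lt_pi h (by linarith [ht.2, Real.pi_pos])
    rw [← cos_sub_sum_sin, sqCot, Real.sinc_of_ne_zero h.ne', ← mul_sum]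
    field_simp
    ring

/-- The value of `∫₀^{π/4} 2 t² sin (2 (k + 1) t) dt`. -/
noncomputable def sineMoment (k : ℕ) : ℝ :=
  -(π ^ 2 / 16) * Real.cos (((k : ℝ) + 1) * (π / 2)) / ((k : ℝ) + 1) +
    π / 4 * Real.sin (((k : ℝ) + 1) * (π / 2)) / ((k : ℝ) + 1) ^ 2 +
    (Real.cos (((k : ℝ) + 1) * (π / 2)) - 1) / (2 * ((k : ℝ) + 1) ^ 3)

lemma integral_sq_mul_sin (k : ℕ) :
    ∫ t in (0 : ℝ)..(π / 4), 2 * t ^ 2 * Real.sin (2 * ((k : ℝ) + 1) * t) = sineMoment k := by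
  have hk : (k : ℝ) + 1 ≠ 0 := by positivity
  have hd : ∀ t ∈ Set.uIcc (0 : ℝ) (π / 4),
      HasDerivAt (fun t => -(t ^ 2 * Real.cos (2 * ((k : ℝ) + 1) * t) / ((k : ℝ) + 1)) +
        t * Real.sin (2 * ((k : ℝ) + 1) * t) / ((k : ℝ) + 1) ^ 2 +
        Real.cos (2 * ((k : ℝ) + 1) * t) / (2 * ((k : ℝ) + 1) ^ 3))
        (2 * t ^ 2 * Real.sin (2 * ((k : ℝ) + 1) * t)) t := by
    intro t _
    have hl : HasDerivAt (fun t : ℝ => 2 * ((k : ℝ) + 1) * t) (2 * ((k : ℝ) + 1)) t := by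
      simpa using (hasDerivAt_id t).const_mul (2 * ((k : ℝ) + 1))
    refine (((((hasDerivAt_pow 2 t).fun_mul hl.cos).div_const ((k : ℝ) + 1)).fun_neg.fun_add
      (((hasDerivAt_id' t).fun_mul hl.sin).div_const (((k : ℝ) + 1) ^ 2))).fun_add
      (hl.cos.div_const (2 * ((k : ℝ) + 1) ^ 3))).congr_deriv ?_
    field_simp
    ring
  rw [intervalIntegral.integral_eq_sub_of_hasDerivAt hd
    (Continuous.intervalIntegrable (by fun_prop) _ _), sineMoment,
    show 2 * ((k : ℝ) + 1) * (π / 4) = ((k : ℝ) + 1) * (π / 2) by ring]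
  simp
  field_simp
  ring

lemma sineMoment_even (j : ℕ) :
    sineMoment (2 * j) = π / 4 * ((-1) ^ j / (2 * (j : ℝ) + 1) ^ 2) -
      1 / 2 * (1 / (2 * (j : ℝ) + 1) ^ 3) := by
  have h : (((2 * j : ℕ) : ℝ) + 1) * (π / 2) = π / 2 + j * π := by push_cast; ring
  rw [sineMoment, h, Real.cos_add_nat_mul_pi, Real.sin_add_nat_mul_pi,
    Real.cos_pi_div_two, Real.sin_pi_div_two]
  push_cast
  have : 2 * (j : ℝ) + 1 ≠ 0 := by positivity
  field_simp
  ring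

lemma sineMoment_odd (j : ℕ) :
    sineMoment (2 * j + 1) = π ^ 2 / 32 * ((-1) ^ j / ((j : ℝ) + 1)) -
      1 / 16 * ((-1) ^ j / ((j : ℝ) + 1) ^ 3) - 1 / 16 * (1 / ((j : ℝ) + 1) ^ 3) := by
  have h : (((2 * j + 1 : ℕ) : ℝ) + 1) * (π / 2) = ((j + 1 : ℕ) : ℝ) * π := by push_cast; ring
  rw [sineMoment, h, Real.cos_nat_mul_pi, Real.sin_nat_mul_pi, pow_succ]
  push_cast
  have : (j : ℝ) + 1 ≠ 0 := by positivity
  field_simp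
  ring

lemma sum_range_two_mul' (f : ℕ → ℝ) (M : ℕ) :
    ∑ k ∈ range (2 * M), f k = ∑ j ∈ range M, (f (2 * j) + f (2 * j + 1)) := by
  induction M with
  | zero => simp
  | succ M ih =>
    rw [show 2 * (M + 1) = 2 * M + 1 + 1 by ring, sum_range_succ, sum_range_succ, ih,
      sum_range_succ _ M]
    ring

lemma tendsto_sum_sineMoment :
    Tendsto (fun M => ∑ k ∈ range (2 * M), sineMoment k) atTop
      (𝓝 (∫ t in (0 : ℝ)..(π / 4), sqCot t)) := by
  have hg : ContinuousOn (fun t => t / Real.sinc t) (Set.Icc 0 (π / 4)) :=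
    ContinuousOn.div (by fun_prop) (by fun_prop) fun _ h => sinc_ne_zero h
  have hpi : (0 : ℝ) ≤ π / 4 := by positivity
  have hRL := tendsto_integral_mul_cos hpi hg
  have hw : Tendsto (fun M : ℕ => 2 * ((2 * M : ℕ) : ℝ) + 1) atTop atTop := by
    refine tendsto_atTop_mono (fun M => ?_) tendsto_natCast_atTop_atTop
    push_cast
    have : (0 : ℝ) ≤ M := by positivity
    linarith
  have h := (hRL.comp hw).const_sub (∫ t in (0 : ℝ)..(π / 4), sqCot t)
  rw [sub_zero] at h
  refine h.congr fun M => ?_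
  have hint : IntervalIntegrable
      (fun t => t / Real.sinc t * Real.cos ((2 * ((2 * M : ℕ) : ℝ) + 1) * t)) volume 0 (π / 4) := by
    refine ContinuousOn.intervalIntegrable ?_
    rw [Set.uIcc_of_le hpi]
    exact hg.mul (by fun_prop)
  have hI : ∫ t in (0 : ℝ)..(π / 4), sqCot t =
      ∫ t in (0 : ℝ)..(π / 4),
        (∑ k ∈ range (2 * M), 2 * t ^ 2 * Real.sin (2 * ((k : ℝ) + 1) * t) +
        t / Real.sinc t * Real.cos ((2 * ((2 * M : ℕ) : ℝ) + 1) * t)) := by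
    refine intervalIntegral.integral_congr fun t ht => ?_
    rw [Set.uIcc_of_le hpi] at ht
    exact sqCot_eq (2 * M) t ht
  rw [Function.comp_apply, hI, intervalIntegral.integral_add
    (Continuous.intervalIntegrable (by fun_prop) _ _) hint, add_sub_cancel_right,
    intervalIntegral.integral_finsetSum
      fun k _ => Continuous.intervalIntegrable (by fun_prop) _ _]
  exact sum_congr rfl fun k _ => integral_sq_mul_sin k

/-! ### Sums of cubes and of Catalan type -/

lemma summable_cube : Summable (fun n : ℕ => 1 / ((n : ℝ) + 1) ^ 3) := by
  have := (summable_nat_add_iff 1).2 (Real.summable_one_div_nat_pow.2 (by norm_num : 1 < 3))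
  simpa using this

lemma summable_odd_cube : Summable (fun n : ℕ => 1 / (2 * (n : ℝ) + 1) ^ 3) := by
  have := summable_cube.comp_injective (i := fun n : ℕ => 2 * n) fun a b h => by simpa using h
  simpa [Function.comp_def] using this

lemma tsum_odd_cube :
    ∑' n : ℕ, 1 / (2 * (n : ℝ) + 1) ^ 3 = 7 / 8 * ∑' n : ℕ, 1 / ((n : ℝ) + 1) ^ 3 := by
  have he : ∀ n : ℕ, 1 / (((2 * n + 1 : ℕ) : ℝ) + 1) ^ 3 = 1 / 8 * (1 / ((n : ℝ) + 1) ^ 3) := by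
    intro n
    push_cast
    field_simp
    ring
  have h := tsum_even_add_odd (f := fun n : ℕ => 1 / ((n : ℝ) + 1) ^ 3)
    (by simpa using summable_odd_cube) (by simp_rw [he]; exact summable_cube.mul_left _)
  simp_rw [he] at h
  rw [tsum_mul_left] at h
  push_cast at h
  linarith

lemma hasSum_alternating_cube :
    HasSum (fun n : ℕ => (-1 : ℝ) ^ n / ((n : ℝ) + 1) ^ 3)
      (3 / 4 * ∑' n : ℕ, 1 / ((n : ℝ) + 1) ^ 3) := by
  have ho : ∀ n : ℕ, -(1 / 8 * (1 / ((n : ℝ) + 1) ^ 3)) =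
      (-1 : ℝ) ^ (2 * n + 1) / (((2 * n + 1 : ℕ) : ℝ) + 1) ^ 3 := by
    intro n
    rw [pow_succ (-1 : ℝ), pow_mul]
    push_cast
    field_simp
    norm_num
    ring
  have he : ∀ n : ℕ, 1 / (2 * (n : ℝ) + 1) ^ 3 =
      (-1 : ℝ) ^ (2 * n) / (((2 * n : ℕ) : ℝ) + 1) ^ 3 := by
    intro n
    rw [pow_mul]
    simp
  have h1 := summable_odd_cube.hasSum
  have h2 := (summable_cube.hasSum.mul_left (1 / 8)).neg
  simp_rw [he] at h1
  simp_rw [ho] at h2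
  have h := HasSum.even_add_odd (f := fun n : ℕ => (-1 : ℝ) ^ n / ((n : ℝ) + 1) ^ 3) h1 h2
  simp_rw [← he] at h
  rw [tsum_odd_cube] at h
  convert h using 1
  ring

lemma summable_catalan : Summable (fun n : ℕ => (-1 : ℝ) ^ n / (2 * (n : ℝ) + 1) ^ 2) := by
  have h := (summable_nat_add_iff 1).2 (Real.summable_one_div_nat_pow.2 (by norm_num : 1 < 2))
  refine Summable.of_norm_bounded h fun n => ?_
  rw [norm_div, norm_pow, norm_neg, norm_one, one_pow, Real.norm_of_nonneg (by positivity)]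
  push_cast
  gcongr
  have : (0 : ℝ) ≤ n := by positivity
  linarith

/-- `∑_{n=1}^∞ 2ⁿ/(n³ C(2n,n)) = −(35/16)ζ(3) + (π²/8) log 2 + πG`,
where `G` is Catalan's constant. -/
theorem stmt_10 :
    ∑' n : ℕ, (2 : ℝ) ^ (n + 1) /
        (((n : ℝ) + 1) ^ 3 * ((2 * (n + 1)).choose (n + 1) : ℝ)) =
      -(35 / 16) * (∑' n : ℕ, 1 / ((n : ℝ) + 1) ^ 3) + (π ^ 2 / 8) * Real.log 2 +
        π * ∑' n : ℕ, (-1 : ℝ) ^ n / (2 * (n : ℝ) + 1) ^ 2 := by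
  -- The moments are taken in pairs of indices `2j`, `2j + 1`, split by the parity of the index.
  have hsum : ∀ M, ∑ k ∈ range (2 * M), sineMoment k =
      π / 4 * ∑ j ∈ range M, (-1 : ℝ) ^ j / (2 * (j : ℝ) + 1) ^ 2 -
      1 / 2 * ∑ j ∈ range M, 1 / (2 * (j : ℝ) + 1) ^ 3 +
      (π ^ 2 / 32 * ∑ j ∈ range M, (-1 : ℝ) ^ j / ((j : ℝ) + 1) -
      1 / 16 * ∑ j ∈ range M, (-1 : ℝ) ^ j / ((j : ℝ) + 1) ^ 3 -
      1 / 16 * ∑ j ∈ range M, 1 / ((j : ℝ) + 1) ^ 3) := by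
    intro M
    rw [sum_range_two_mul']
    simp_rw [sineMoment_even, sineMoment_odd, sum_add_distrib, sum_sub_distrib, mul_sum]
  have hlim := (((summable_catalan.hasSum.tendsto_sum_nat.const_mul (π / 4)).sub
    (summable_odd_cube.hasSum.tendsto_sum_nat.const_mul (1 / 2))).add
    (((tendsto_sum_alternating_harmonic.const_mul (π ^ 2 / 32)).sub
    (hasSum_alternating_cube.tendsto_sum_nat.const_mul (1 / 16))).sub
    (summable_cube.hasSum.tendsto_sum_nat.const_mul (1 / 16)))).congr fun M => (hsum M).symm
  rw [tsum_eq_integral, tendsto_nhds_unique tendsto_sum_sineMoment hlim, tsum_odd_cube]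
  ring
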